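/- Linear residual network at initialization: fix integers n, L ≥ 1, a real α, and a nonzero vector x⁰ ∈ ℝⁿ; let W¹, …, W^L be independent n×n random matrices with i.i.d. N(0, 1/n) entries, and define x^l := x^{l−1} + L^{−α} W^l x^{l−1} for l = 1, …, L. Let V ∈ ℝⁿ have i.i.d. N(0, n^{−2}) entries, independent of W¹, …, W^L, and set f₀ := Vᵀ x^L. Then E[f₀²] = n^{−2} · (1 + L^{−2α})^L · ‖x⁰‖². In particular, for α ≥ 1/2 the output second moment E[f₀²] is bounded uniformly over all depths L, while for α < 1/2 it diverges as L → ∞. -/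

import Mathlib

open MeasureTheory ProbabilityTheory Finset Filter Topology
open scoped NNReal

/-- The joint law of `L` independent `n × n` random matrices `W¹, …, W^L` with i.i.d.
`N(0, 1/n)` entries together with an independent readout vector `V` with i.i.d.
`N(0, n^{−2})` entries. -/
noncomputable def gaussNetOut (n L : ℕ) :
    Measure ((Fin L → Fin n → Fin n → ℝ) × (Fin n → ℝ)) :=
  (Measure.pi fun _ : Fin L =>
      Measure.pi fun _ : Fin n => Measure.pi fun _ : Fin n => gaussianReal 0 (n : ℝ≥0)⁻¹).prod
    (Measure.pi fun _ : Fin n => gaussianReal 0 (((n : ℝ≥0)) ^ 2)⁻¹)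

/-- The forward pass of the linear residual network at initialization:
`x⁰` is the input and `x^l = x^{l−1} + L^{−α} W^l x^{l−1}` for `1 ≤ l ≤ L`. -/
noncomputable def resX (n : ℕ) (α : ℝ) (x0 : Fin n → ℝ) (L : ℕ)
    (ω : Fin L → Fin n → Fin n → ℝ) : ℕ → Fin n → ℝ
  | 0 => x0
  | l + 1 =>
    resX n α x0 L ω l +
      if h : l < L then
        ((L : ℝ) ^ (-α)) • Matrix.mulVec (Matrix.of (ω ⟨l, h⟩)) (resX n α x0 L ω l)
      else 0

/-!
For an `n × n` matrix `W` with independent centred entries of variance `v` and fixed vectors `b`,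
`y`, the cross terms vanish and `E ‖b + W y‖² = ‖b‖² + n v ‖y‖²`. Conditionally on the first `l`
layers, `x^l` is fixed and `W^{l+1}` is fresh, so with `v = 1/n` each layer multiplies `E ‖x^l‖²` by
`1 + L^{-2α}`; the readout contributes the factor `n⁻²`. The depth dichotomy is then
`(1 + 1/L)^L ≤ e` on one side and Bernoulli's inequality `(1 + L^{-2α})^L ≥ L^{1-2α}` on the other.
-/

section LinearForms

/-- A square-integrable law on `ℝ` with mean `0` and variance `v`. This is all that the second
moments of the network remember of the laws of its weights. -/
structure IsCenteredWithVariance (μ : Measure ℝ) (v : ℝ≥0) : Prop where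
  memLp_id : MemLp id 2 μ
  integral_eq_zero : ∫ t, t ∂μ = 0
  variance_eq : Var[fun t ↦ t; μ] = v

lemma isCenteredWithVariance_gaussianReal (v : ℝ≥0) :
    IsCenteredWithVariance (gaussianReal 0 v) v where
  memLp_id := memLp_id_gaussianReal' 2 (by simp)
  integral_eq_zero := integral_id_gaussianReal
  variance_eq := variance_fun_id_gaussianReal

lemma lintegral_ofReal_sq {Ω : Type*} [MeasurableSpace Ω] {P : Measure Ω} [IsProbabilityMeasure P]
    {X : Ω → ℝ} (hX : MemLp X 2 P) :
    ∫⁻ ω, ENNReal.ofReal (X ω ^ 2) ∂P = ENNReal.ofReal (Var[X; P] + P[X] ^ 2) := by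
  rw [← ofReal_integral_eq_lintegral_ofReal hX.integrable_sq (.of_forall fun _ ↦ sq_nonneg _),
    variance_eq_sub hX, sub_add_cancel]
  rfl

variable {ι κ : Type*} [Fintype ι] [Fintype κ]
  {μ : ι → Measure ℝ} [∀ j, IsProbabilityMeasure (μ j)] {v : ι → ℝ≥0}

lemma memLp_dotProduct_pi (hμ : ∀ j, MemLp id 2 (μ j)) (y : ι → ℝ) :
    MemLp (fun w ↦ w ⬝ᵥ y) 2 (Measure.pi μ) :=
  memLp_finsetSum _ fun j _ ↦
    ((hμ j).mul_const (y j)).comp_measurePreserving (measurePreserving_eval μ j)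

lemma integral_dotProduct_pi (hμ : ∀ j, IsCenteredWithVariance (μ j) (v j)) (y : ι → ℝ) :
    ∫ w, w ⬝ᵥ y ∂Measure.pi μ = 0 := by
  have integrable_term (j : ι) : Integrable (fun w : ι → ℝ ↦ w j * y j) (Measure.pi μ) :=
    (((hμ j).memLp_id.comp_measurePreserving (measurePreserving_eval μ j)).integrable
      one_le_two).mul_const (y j)
  simp only [dotProduct]
  rw [integral_finsetSum _ fun j _ ↦ integrable_term j]
  refine Finset.sum_eq_zero fun j _ ↦ ?_
  rw [integral_mul_const, integral_eval, (hμ j).integral_eq_zero, zero_mul]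

lemma variance_dotProduct_pi (hμ : ∀ j, IsCenteredWithVariance (μ j) (v j)) (y : ι → ℝ) :
    Var[fun w ↦ w ⬝ᵥ y; Measure.pi μ] = ∑ j, v j * y j ^ 2 := by
  have sum_eq : (fun w : ι → ℝ ↦ w ⬝ᵥ y) = ∑ j, fun w ↦ w j * y j := by
    ext w
    simp only [dotProduct, Finset.sum_apply]
  rw [sum_eq, variance_sum_pi (X := fun j t ↦ t * y j) fun j ↦ (hμ j).memLp_id.mul_const (y j)]
  simp only [variance_mul_const, (hμ _).variance_eq]

lemma lintegral_sq_const_add_dotProduct_pi (hμ : ∀ j, IsCenteredWithVariance (μ j) (v j))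
    (b : ℝ) (y : ι → ℝ) :
    ∫⁻ w, ENNReal.ofReal ((b + w ⬝ᵥ y) ^ 2) ∂Measure.pi μ =
      ENNReal.ofReal (b ^ 2 + ∑ j, v j * y j ^ 2) := by
  have memLp_form := memLp_dotProduct_pi (fun j ↦ (hμ j).memLp_id) y
  have memLp_affine : MemLp (fun w : ι → ℝ ↦ b + w ⬝ᵥ y) 2 (Measure.pi μ) :=
    (memLp_const b).add memLp_form
  rw [lintegral_ofReal_sq memLp_affine,
    variance_const_add memLp_form.aestronglyMeasurable, variance_dotProduct_pi hμ,
    integral_add (integrable_const b) (memLp_form.integrable one_le_two),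
    integral_dotProduct_pi hμ, integral_const, probReal_univ, one_smul, add_zero, add_comm]

lemma lintegral_sum_sq_add_mulVec_pi {μ : κ → ι → Measure ℝ} [∀ i j, IsProbabilityMeasure (μ i j)]
    {v : κ → ι → ℝ≥0} (hμ : ∀ i j, IsCenteredWithVariance (μ i j) (v i j))
    (b : κ → ℝ) (y : ι → ℝ) :
    ∫⁻ W, ENNReal.ofReal (∑ i, (b + Matrix.mulVec (Matrix.of W) y) i ^ 2)
        ∂(Measure.pi fun i ↦ Measure.pi (μ i)) =
      ENNReal.ofReal (∑ i, (b i ^ 2 + ∑ j, v i j * y j ^ 2)) := by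
  have measurable_row (i : κ) : Measurable fun w : ι → ℝ ↦ ENNReal.ofReal ((b i + w ⬝ᵥ y) ^ 2) := by
    unfold dotProduct
    fun_prop
  calc ∫⁻ W, ENNReal.ofReal (∑ i, (b + Matrix.mulVec (Matrix.of W) y) i ^ 2)
        ∂(Measure.pi fun i ↦ Measure.pi (μ i))
      = ∫⁻ W, ∑ i, ENNReal.ofReal ((b i + W i ⬝ᵥ y) ^ 2)
          ∂(Measure.pi fun i ↦ Measure.pi (μ i)) :=
        lintegral_congr fun W ↦ ENNReal.ofReal_sum_of_nonneg fun i _ ↦ sq_nonneg _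
    _ = ∑ i, ∫⁻ W, ENNReal.ofReal ((b i + W i ⬝ᵥ y) ^ 2)
          ∂(Measure.pi fun i ↦ Measure.pi (μ i)) :=
        lintegral_finsetSum _ fun i _ ↦ (measurable_row i).comp (measurable_pi_apply i)
    _ = ∑ i, ENNReal.ofReal (b i ^ 2 + ∑ j, v i j * y j ^ 2) :=
        Finset.sum_congr rfl fun i _ ↦
          ((measurePreserving_eval (fun i ↦ Measure.pi (μ i)) i).lintegral_comp
            (measurable_row i)).trans (lintegral_sq_const_add_dotProduct_pi (hμ i) (b i) y)
    _ = ENNReal.ofReal (∑ i, (b i ^ 2 + ∑ j, v i j * y j ^ 2)) :=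
        (ENNReal.ofReal_sum_of_nonneg fun i _ ↦ by positivity).symm

lemma lintegral_sum_sq_add_smul_mulVec_iid {μ : Measure ℝ} [IsProbabilityMeasure μ] {v : ℝ≥0}
    (hμ : IsCenteredWithVariance μ v) (c : ℝ) (y : ι → ℝ) :
    ∫⁻ W, ENNReal.ofReal (∑ i, (y + c • Matrix.mulVec (Matrix.of W) y) i ^ 2)
        ∂(Measure.pi fun _ : ι ↦ Measure.pi fun _ : ι ↦ μ) =
      ENNReal.ofReal ((1 + c ^ 2 * (Fintype.card ι * v)) * ∑ i, y i ^ 2) := by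
  simp only [← Matrix.mulVec_smul]
  rw [lintegral_sum_sq_add_mulVec_pi fun _ _ ↦ hμ]
  simp only [Finset.sum_add_distrib, Finset.sum_const, Finset.card_univ, nsmul_eq_mul,
    Pi.smul_apply, smul_eq_mul, mul_pow, ← Finset.mul_sum]
  congr 1
  ring

end LinearForms

section ForwardPass

/-- The joint law of `L` independent `n × n` weight matrices with i.i.d. entries of law `μ`. -/
noncomputable abbrev weightLaw (μ : Measure ℝ) (n L : ℕ) : Measure (Fin L → Fin n → Fin n → ℝ) :=
  Measure.pi fun _ ↦ Measure.pi fun _ ↦ Measure.pi fun _ ↦ μ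

variable {n : ℕ} (α : ℝ) (x0 : Fin n → ℝ) {L : ℕ}

lemma resX_succ_of_lt (ω : Fin L → Fin n → Fin n → ℝ) {l : ℕ} (hl : l < L) :
    resX n α x0 L ω (l + 1) = resX n α x0 L ω l +
      (L : ℝ) ^ (-α) • Matrix.mulVec (Matrix.of (ω ⟨l, hl⟩)) (resX n α x0 L ω l) := by
  rw [resX, dif_pos hl]

lemma measurable_resX (l : ℕ) : Measurable fun ω ↦ resX n α x0 L ω l := by
  induction l with
  | zero => exact measurable_const
  | succ l ih =>
    have measurable_coord := measurable_pi_iff.1 ih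
    refine measurable_pi_iff.2 fun i ↦ ?_
    by_cases hl : l < L
    · simp only [resX_succ_of_lt α x0 _ hl, Pi.add_apply, Pi.smul_apply, Matrix.mulVec, dotProduct,
        Matrix.of_apply, smul_eq_mul]
      fun_prop
    · simpa only [resX, dif_neg hl, add_zero] using measurable_coord i

lemma resX_update_of_le (ω : Fin L → Fin n → Fin n → ℝ) {k : Fin L} (W : Fin n → Fin n → ℝ)
    {l : ℕ} (hl : l ≤ k) :
    resX n α x0 L (Function.update ω k W) l = resX n α x0 L ω l := by
  induction l with
  | zero => rfl
  | succ l ih =>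
    have hlk : l < k := hl
    have layer_ne : (⟨l, hlk.trans k.isLt⟩ : Fin L) ≠ k := Fin.ne_of_lt hlk
    rw [resX_succ_of_lt α x0 _ (hlk.trans k.isLt), resX_succ_of_lt α x0 _ (hlk.trans k.isLt),
      ih hlk.le, Function.update_of_ne layer_ne]

variable {μ : Measure ℝ} [IsProbabilityMeasure μ] {v : ℝ≥0}

lemma lintegral_sum_sq_resX_succ (hμ : IsCenteredWithVariance μ v) {l : ℕ} (hl : l < L) :
    ∫⁻ ω, ENNReal.ofReal (∑ i, resX n α x0 L ω (l + 1) i ^ 2) ∂weightLaw μ n L =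
      ENNReal.ofReal (1 + ((L : ℝ) ^ (-α)) ^ 2 * (n * v)) *
        ∫⁻ ω, ENNReal.ofReal (∑ i, resX n α x0 L ω l i ^ 2) ∂weightLaw μ n L := by
  have measurable_sum_sq (l : ℕ) :
      Measurable fun ω ↦ ENNReal.ofReal (∑ i, resX n α x0 L ω l i ^ 2) := by
    have := measurable_pi_iff.1 (measurable_resX α x0 (L := L) l)
    fun_prop
  rw [← lintegral_const_mul _ (measurable_sum_sq l)]
  -- It suffices to integrate out the layer `W^{l+1}`, on which `x^l` does not depend.
  refine lintegral_eq_of_lmarginal_eq {⟨l, hl⟩} (measurable_sum_sq (l + 1))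
    ((measurable_sum_sq l).const_mul _) ?_
  simp only [lmarginal_singleton]
  funext ω
  simp only [resX_succ_of_lt α x0 _ hl, Function.update_self,
    resX_update_of_le α x0 ω (k := ⟨l, hl⟩) _ le_rfl]
  rw [lintegral_sum_sq_add_smul_mulVec_iid hμ, Fintype.card_fin,
    ENNReal.ofReal_mul (by positivity), lintegral_const, measure_univ, mul_one]

lemma lintegral_sum_sq_resX (hμ : IsCenteredWithVariance μ v) {l : ℕ} (hl : l ≤ L) :
    ∫⁻ ω, ENNReal.ofReal (∑ i, resX n α x0 L ω l i ^ 2) ∂weightLaw μ n L =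
      ENNReal.ofReal ((1 + ((L : ℝ) ^ (-α)) ^ 2 * (n * v)) ^ l * ∑ i, x0 i ^ 2) := by
  induction l with
  | zero => simp [resX]
  | succ l ih =>
    rw [lintegral_sum_sq_resX_succ α x0 hμ hl, ih (Nat.le_of_succ_le hl),
      ← ENNReal.ofReal_mul (by positivity), ← mul_assoc, ← pow_succ']

end ForwardPass

section Output

/-- The joint law of the weights, with i.i.d. entries of law `μ`, and of an independent readout
vector with i.i.d. entries of law `ν`; `gaussNetOut` is the Gaussian case. -/
noncomputable def netLaw (μ ν : Measure ℝ) (n L : ℕ) :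
    Measure ((Fin L → Fin n → Fin n → ℝ) × (Fin n → ℝ)) :=
  (weightLaw μ n L).prod (Measure.pi fun _ : Fin n ↦ ν)

variable {μ ν : Measure ℝ} [IsProbabilityMeasure μ] [IsProbabilityMeasure ν] {v u : ℝ≥0}

lemma integral_sq_output (hμ : IsCenteredWithVariance μ v) (hν : IsCenteredWithVariance ν u) {n : ℕ}
    (α : ℝ) (x0 : Fin n → ℝ) (L : ℕ) :
    ∫ ω, (∑ i, ω.2 i * resX n α x0 L ω.1 L i) ^ 2 ∂netLaw μ ν n L =
      u * ((1 + ((L : ℝ) ^ (-α)) ^ 2 * (n * v)) ^ L * ∑ i, x0 i ^ 2) := by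
  have measurable_coord := measurable_pi_iff.1 (measurable_resX α x0 (L := L) L)
  have measurable_output : Measurable fun ω : (Fin L → Fin n → Fin n → ℝ) × (Fin n → ℝ) ↦
      (∑ i, ω.2 i * resX n α x0 L ω.1 L i) ^ 2 := by
    fun_prop
  have lintegral_readout (x : Fin n → ℝ) :
      ∫⁻ V, ENNReal.ofReal ((∑ i, V i * x i) ^ 2) ∂(Measure.pi fun _ : Fin n ↦ ν) =
        ENNReal.ofReal u * ENNReal.ofReal (∑ i, x i ^ 2) := by
    rw [← ENNReal.ofReal_mul u.coe_nonneg, Finset.mul_sum]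
    simpa [dotProduct] using lintegral_sq_const_add_dotProduct_pi (fun _ ↦ hν) 0 x
  rw [integral_eq_lintegral_of_nonneg_ae (.of_forall fun _ ↦ sq_nonneg _)
    measurable_output.aestronglyMeasurable, netLaw,
    lintegral_prod _ measurable_output.ennreal_ofReal.aemeasurable]
  simp only [lintegral_readout]
  rw [lintegral_const_mul _ (by fun_prop), lintegral_sum_sq_resX α x0 hμ le_rfl,
    ← ENNReal.ofReal_mul u.coe_nonneg, ENNReal.toReal_ofReal (by positivity)]

lemma integral_sq_output_of_variance_inv {n : ℕ} (hn : n ≠ 0)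
    (hμ : IsCenteredWithVariance μ (n : ℝ≥0)⁻¹) (hν : IsCenteredWithVariance ν ((n : ℝ≥0) ^ 2)⁻¹)
    (α : ℝ) (x0 : Fin n → ℝ) (L : ℕ) :
    ∫ ω, (∑ i, ω.2 i * resX n α x0 L ω.1 L i) ^ 2 ∂netLaw μ ν n L =
      ((n : ℝ) ^ 2)⁻¹ * (1 + (L : ℝ) ^ (-(2 * α))) ^ L * ∑ i, x0 i ^ 2 := by
  have sq_rpow : ((L : ℝ) ^ (-α)) ^ 2 = (L : ℝ) ^ (-(2 * α)) := by
    rw [← Real.rpow_mul_natCast L.cast_nonneg, Nat.cast_ofNat, neg_mul, mul_comm]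
  have variance_scale : (n : ℝ) * ((n : ℝ≥0)⁻¹ : ℝ≥0) = 1 := by
    rw [NNReal.coe_inv, NNReal.coe_natCast, mul_inv_cancel₀ (mod_cast hn)]
  rw [integral_sq_output hμ hν, sq_rpow, variance_scale, mul_one, mul_assoc, NNReal.coe_inv,
    NNReal.coe_pow, NNReal.coe_natCast]

end Output

lemma one_add_rpow_neg_pow_le_exp_one {β : ℝ} (hβ : 1 ≤ β) (k : ℕ) :
    (1 + (k : ℝ) ^ (-β)) ^ k ≤ Real.exp 1 := by
  rcases k.eq_zero_or_pos with rfl | hk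
  · simp
  have rpow_le_inv : (k : ℝ) ^ (-β) ≤ (k : ℝ)⁻¹ := by
    rw [← Real.rpow_neg_one]
    exact Real.rpow_le_rpow_of_exponent_le (mod_cast hk) (neg_le_neg hβ)
  calc (1 + (k : ℝ) ^ (-β)) ^ k ≤ (1 + (k : ℝ)⁻¹) ^ k := by gcongr
    _ ≤ Real.exp 1 := Real.one_add_inv_pow_le_exp

lemma tendsto_one_add_rpow_neg_pow_atTop {β : ℝ} (hβ : β < 1) :
    Tendsto (fun k : ℕ ↦ (1 + (k : ℝ) ^ (-β)) ^ k) atTop atTop := by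
  have tendsto_rpow : Tendsto (fun k : ℕ ↦ (k : ℝ) ^ (1 - β)) atTop atTop :=
    (tendsto_rpow_atTop (sub_pos.2 hβ)).comp tendsto_natCast_atTop_atTop
  refine tendsto_atTop_mono' _ ?_ tendsto_rpow
  filter_upwards [eventually_gt_atTop 0] with k hk
  have rpow_nonneg : 0 ≤ (k : ℝ) ^ (-β) := by positivity
  calc (k : ℝ) ^ (1 - β) = k * (k : ℝ) ^ (-β) := by
        rw [sub_eq_add_neg, Real.rpow_add (mod_cast hk), Real.rpow_one]
    _ ≤ 1 + k * (k : ℝ) ^ (-β) := le_add_of_nonneg_left zero_le_one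
    _ ≤ (1 + (k : ℝ) ^ (-β)) ^ k := one_add_mul_le_pow (by linarith) k

theorem stmt_17_general {μ ν : Measure ℝ} [IsProbabilityMeasure μ] [IsProbabilityMeasure ν] {n : ℕ}
    (hμ : IsCenteredWithVariance μ (n : ℝ≥0)⁻¹) (hν : IsCenteredWithVariance ν ((n : ℝ≥0) ^ 2)⁻¹)
    (α : ℝ) {x0 : Fin n → ℝ} (hx0 : x0 ≠ 0) :
    (∀ L : ℕ, ∫ ω, (∑ i, ω.2 i * resX n α x0 L ω.1 L i) ^ 2 ∂netLaw μ ν n L =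
      ((n : ℝ) ^ 2)⁻¹ * (1 + (L : ℝ) ^ (-(2 * α))) ^ L * ∑ i, x0 i ^ 2) ∧
    (1 / 2 ≤ α → ∃ M : ℝ, ∀ L : ℕ,
      ∫ ω, (∑ i, ω.2 i * resX n α x0 L ω.1 L i) ^ 2 ∂netLaw μ ν n L ≤ M) ∧
    (α < 1 / 2 →
      Tendsto (fun L : ℕ ↦ ∫ ω, (∑ i, ω.2 i * resX n α x0 L ω.1 L i) ^ 2 ∂netLaw μ ν n L)
        atTop atTop) := by
  obtain ⟨i, hi⟩ := Function.ne_iff.1 hx0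
  have hn : n ≠ 0 := i.pos.ne'
  have norm_pos : 0 < ∑ i, x0 i ^ 2 :=
    Finset.sum_pos' (fun _ _ ↦ sq_nonneg _) ⟨i, Finset.mem_univ i, sq_pos_of_ne_zero hi⟩
  have readout_pos : 0 < ((n : ℝ) ^ 2)⁻¹ := by positivity
  simp only [integral_sq_output_of_variance_inv hn hμ hν]
  refine ⟨fun _ ↦ trivial, fun hα ↦ ?_, fun hα ↦ ?_⟩
  · refine ⟨((n : ℝ) ^ 2)⁻¹ * Real.exp 1 * ∑ i, x0 i ^ 2, fun L ↦ ?_⟩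
    gcongr
    exact one_add_rpow_neg_pow_le_exp_one (by linarith) L
  · have depth_factor := tendsto_one_add_rpow_neg_pow_atTop (show 2 * α < 1 by linarith)
    exact (depth_factor.const_mul_atTop readout_pos).atTop_mul_const norm_pos

/-- With `f₀ = Vᵀ x^L`, one has
`E[f₀²] = n^{−2}·(1 + L^{−2α})^L·‖x⁰‖²`; in particular for `α ≥ 1/2` the output second
moment is bounded uniformly over all depths `L ≥ 1`, while for `α < 1/2` it diverges. -/
theorem stmt_17 (n : ℕ) (hn : 1 ≤ n) (α : ℝ) (x0 : Fin n → ℝ) (hx0 : x0 ≠ 0) :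
    (∀ L : ℕ, 1 ≤ L →
      (∫ ω, (∑ i, ω.2 i * resX n α x0 L ω.1 L i) ^ 2 ∂(gaussNetOut n L)) =
        ((n : ℝ) ^ 2)⁻¹ * (1 + (L : ℝ) ^ (-(2 * α))) ^ L * ∑ i, (x0 i) ^ 2) ∧
    (1 / 2 ≤ α → ∃ M : ℝ, ∀ L : ℕ, 1 ≤ L →
      (∫ ω, (∑ i, ω.2 i * resX n α x0 L ω.1 L i) ^ 2 ∂(gaussNetOut n L)) ≤ M) ∧
    (α < 1 / 2 →
      Tendsto (fun L : ℕ => ∫ ω, (∑ i, ω.2 i * resX n α x0 L ω.1 L i) ^ 2 ∂(gaussNetOut n L))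
        atTop atTop) := by
  obtain ⟨moment, bounded, diverges⟩ := stmt_17_general (isCenteredWithVariance_gaussianReal _)
    (isCenteredWithVariance_gaussianReal _) α hx0
  exact ⟨fun L _ ↦ moment L, fun hα ↦ (bounded hα).imp fun _ hM L _ ↦ hM L, diverges⟩
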